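/- Let f be analytic on the unit disc D with f(0)=0, f'(0)=1, and let α > 1. If |arg(α + z f''(z)/f'(z))| < arctan(√3/(α−1)) for all z in D, then f is starlike, i.e. Re(z f'(z)/f(z)) > 0 for all z in D. -/

import Mathlib

open Complex Metric Real

lemma aux_sector {w : ℂ} {c : ℝ} (h : |Complex.arg w| < Real.arctan c) :
    0 ≤ w.re ∧ (0 < w.re → |w.im| < c * w.re) := by
  have h2 : |Complex.arg w| < π / 2 := h.trans (Real.arctan_lt_pi_div_two c)
  constructor
  · rcases Complex.abs_arg_lt_pi_div_two_iff.1 h2 with h3 | h3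
    · exact h3.le
    · simp [h3]
  · intro hw
    obtain ⟨h3, h4⟩ := abs_lt.1 h2
    have h5 : Real.arctan (w.im / w.re) = Complex.arg w := by
      rw [← Complex.tan_arg, Real.arctan_tan h3 h4]
    rw [← h5] at h
    obtain ⟨h6, h7⟩ := abs_lt.1 h
    rw [← Real.arctan_neg, Real.arctan_lt_arctan_iff] at h6
    rw [Real.arctan_lt_arctan_iff] at h7
    rw [lt_div_iff₀ hw] at h6
    rw [div_lt_iff₀ hw] at h7
    exact abs_lt.2 ⟨by linarith, h7⟩

lemma aux_re {F : ℝ → ℂ} {F' : ℂ} {t : ℝ} (h : HasDerivAt F F' t) :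
    HasDerivAt (fun t => (F t).re) F'.re t :=
  (Complex.reCLM.hasFDerivAt (x := F t)).comp_hasDerivAt t h

lemma aux_im {F : ℝ → ℂ} {F' : ℂ} {t : ℝ} (h : HasDerivAt F F' t) :
    HasDerivAt (fun t => (F t).im) F'.im t :=
  (Complex.imCLM.hasFDerivAt (x := F t)).comp_hasDerivAt t h

lemma aux_radial {q : ℂ → ℂ} {z : ℂ} {t : ℝ} (h : DifferentiableAt ℂ q (t * z)) :
    HasDerivAt (fun t : ℝ => q (t * z)) (deriv q (t * z) * z) t := by
  have h1 : HasDerivAt (fun s : ℂ => s * z) z (t : ℂ) := by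
    simpa using (hasDerivAt_id (t : ℂ)).mul_const z
  have h2 := HasDerivAt.comp (t : ℂ) (h₂ := q) h.hasDerivAt h1
  exact h2.comp_ofReal

lemma aux_angular {q : ℂ → ℂ} {z : ℂ} (h : DifferentiableAt ℂ q z) :
    HasDerivAt (fun t : ℝ => q (Complex.exp (t * I) * z)) (deriv q z * (I * z)) 0 := by
  have h1 : HasDerivAt (fun s : ℂ => Complex.exp (s * I) * z) (I * z) ((0 : ℝ) : ℂ) := by
    have := (((hasDerivAt_id ((0 : ℝ) : ℂ)).mul_const I).cexp).mul_const z
    simpa using this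
  have h2 : HasDerivAt q (deriv q z) (Complex.exp (((0 : ℝ) : ℂ) * I) * z) := by
    simpa using h.hasDerivAt
  have h3 := HasDerivAt.comp ((0 : ℝ) : ℂ) (h₂ := q) h2 h1
  exact h3.comp_ofReal

lemma aux_left {φ : ℝ → ℝ} {d : ℝ} (h : HasDerivAt φ d 1) (h1 : φ 1 = 0)
    (hle : ∀ t : ℝ, 0 < t → t < 1 → φ t ≤ 0) : 0 ≤ d := by
  have h2 := (hasDerivAt_iff_tendsto_slope.1 h).mono_left
    (nhdsWithin_mono (1 : ℝ) (s := Set.Iio 1) (t := {1}ᶜ) (fun x hx => ne_of_lt hx))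
  refine ge_of_tendsto h2 ?_
  filter_upwards [Ioo_mem_nhdsLT (show (0 : ℝ) < 1 by norm_num)] with t ht
  rw [slope_def_field, h1]
  have := hle t ht.1 ht.2
  rw [div_eq_mul_inv]
  exact mul_nonneg_of_nonpos_of_nonpos (by linarith) (inv_nonpos.2 (by linarith [ht.2]))

/-- Jack / Miller-Mocanu lemma at the boundary. -/
lemma aux_jack {q : ℂ → ℂ} (hq : DifferentiableOn ℂ q (ball 0 1)) (hq0 : q 0 = 1)
    {z : ℂ} (hz : z ∈ ball (0 : ℂ) 1) (hz0 : z ≠ 0) (hre : (q z).re = 0)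
    (hpos : ∀ w : ℂ, ‖w‖ < ‖z‖ → 0 < (q w).re)
    (hnn : ∀ w : ℂ, ‖w‖ = ‖z‖ → 0 ≤ (q w).re) :
    (z * deriv q z).im = 0 ∧ (z * deriv q z).re ≤ -(1 + (q z).im ^ 2) / 2 := by
  have hqz : DifferentiableAt ℂ q z := hq.differentiableAt (isOpen_ball.mem_nhds hz)
  have hr : 0 < ‖z‖ := norm_pos_iff.2 hz0
  have hz1 : ‖z‖ < 1 := by simpa using hz
  constructor
  · have h1 := aux_re (aux_angular hqz)
    have h2 : IsLocalMin (fun t : ℝ => (q (Complex.exp (t * I) * z)).re) 0 := by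
      refine Filter.Eventually.of_forall fun t => ?_
      have := hnn (Complex.exp (t * I) * z) (by simp [Complex.norm_exp_ofReal_mul_I])
      simpa [hre] using this
    have h3 := h2.hasDerivAt_eq_zero h1
    have h4 : (deriv q z * (I * z)).re = - (z * deriv q z).im := by
      simp; ring
    linarith
  · have hsub : ball (0 : ℂ) ‖z‖ ⊆ ball 0 1 := ball_subset_ball hz1.le
    have hne : ∀ w ∈ ball (0 : ℂ) ‖z‖, 1 + q w ≠ 0 := by
      intro w hw h
      have h1 := hpos w (by simpa using hw)
      have h2 := congrArg Complex.re h
      simp at h2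
      linarith
    have hsq : ∀ a : ℂ, ‖a‖ ^ 2 = a.re ^ 2 + a.im ^ 2 := by
      intro a; rw [Complex.sq_norm, Complex.normSq_apply]; ring
    have hsch : ∀ w ∈ ball (0 : ℂ) ‖z‖, ‖(1 - q w) / (1 + q w)‖ ≤ 1 / ‖z‖ * ‖w‖ := by
      intro w hw
      have hd : DifferentiableOn ℂ (fun w => (1 - q w) / (1 + q w)) (ball 0 ‖z‖) :=
        ((differentiableOn_const 1).sub (hq.mono hsub)).div
          ((differentiableOn_const 1).add (hq.mono hsub)) hne
      have := Complex.dist_le_div_mul_dist_of_mapsTo_ball (R₂ := 1) hd ?_ hw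
      · simpa [hq0, dist_eq_norm] using this
      · intro v hv
        have h1 := hpos v (by simpa using hv)
        simp only [hq0, sub_self, zero_div, mem_closedBall, dist_zero_right, norm_div]
        rw [div_le_one (norm_pos_iff.2 (hne v hv))]
        refine le_of_sq_le_sq ?_ (norm_nonneg _)
        rw [hsq, hsq]
        simp
        nlinarith
    have hrad : DifferentiableAt ℂ q (((1 : ℝ) : ℂ) * z) := by simpa using hqz
    have h1 := aux_radial hrad
    have hR := aux_re h1
    have hI := aux_im h1
    have hid := (hasDerivAt_id (1 : ℝ)).pow 2
    have hφ := ((((hasDerivAt_const (1 : ℝ) (1 : ℝ)).sub hR).pow 2).add (hI.pow 2)).sub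
      (hid.mul ((((hasDerivAt_const (1 : ℝ) (1 : ℝ)).add hR).pow 2).add (hI.pow 2)))
    have h5 := aux_left hφ (by simp [hre]) ?_
    · simp [hre] at h5
      simp
      nlinarith
    · intro t ht0 ht1
      have hw : (t : ℂ) * z ∈ ball (0 : ℂ) ‖z‖ := by
        simp [abs_of_pos ht0]
        nlinarith
      have h6 := hsch _ hw
      rw [norm_div, div_le_iff₀ (norm_pos_iff.2 (hne _ hw)), norm_mul, Complex.norm_real,
        Real.norm_of_nonneg ht0.le] at h6
      have h7 : 1 / ‖z‖ * (t * ‖z‖) = t := by field_simp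
      rw [h7] at h6
      have h8 := pow_le_pow_left₀ (norm_nonneg _) h6 2
      rw [mul_pow, hsq, hsq] at h8
      simp at h8
      simp
      linarith

lemma aux_nonvanish {g : ℂ → ℂ} {α : ℝ}
    (hg : DifferentiableOn ℂ g (ball 0 1)) (hg0 : g 0 = 1)
    (h : ∀ z ∈ ball (0 : ℂ) 1, 0 ≤ ((α : ℂ) + z * deriv g z / g z).re) :
    ∀ z ∈ ball (0 : ℂ) 1, g z ≠ 0 := by
  intro z hz hgz
  have hz1 : ‖z‖ < 1 := by simpa using hz
  obtain ⟨n, hn⟩ := exists_nat_ge (max α 1)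
  have hnα : α ≤ n := (le_max_left _ _).trans hn
  have hn1 : (1 : ℝ) ≤ n := (le_max_right _ _).trans hn
  have hn0 : n ≠ 0 := by rintro rfl; norm_num at hn1
  have hmem : ∀ t ∈ Set.Icc (0 : ℝ) 1, (t : ℂ) * z ∈ ball (0 : ℂ) 1 := by
    intro t ht
    simp [abs_of_nonneg ht.1]
    nlinarith [ht.1, ht.2, norm_nonneg z]
  have hd : ∀ t ∈ Set.Icc (0 : ℝ) 1, DifferentiableAt ℂ g (t * z) := fun t ht =>
    hg.differentiableAt (isOpen_ball.mem_nhds (hmem t ht))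
  let N : ℝ → ℝ := fun t => t ^ (2 * n) * ((g (t * z)).re ^ 2 + (g (t * z)).im ^ 2)
  have hN : ∀ t ∈ Set.Icc (0 : ℝ) 1, ∃ d, HasDerivAt N d t ∧ 0 ≤ d := by
    intro t ht
    have h1 := aux_radial (hd t ht)
    have h2 := ((hasDerivAt_id t).pow (2 * n)).mul (((aux_re h1).pow 2).add ((aux_im h1).pow 2))
    refine ⟨_, h2, ?_⟩
    have h3 := h _ (hmem t ht)
    have h4 : 0 ≤ (n : ℝ) * ((g (t * z)).re ^ 2 + (g (t * z)).im ^ 2) + t *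
        ((g (t * z)).re * (deriv g (t * z) * z).re + (g (t * z)).im * (deriv g (t * z) * z).im) := by
      by_cases hgt : g (t * z) = 0
      · simp [hgt]
      have h5 : 0 < Complex.normSq (g (t * z)) := Complex.normSq_pos.2 hgt
      have h6 := mul_nonneg h5.le h3
      rw [Complex.add_re, Complex.div_re] at h6
      have h7 : Complex.normSq (g (t * z)) * ((α : ℂ).re + ((t * z * deriv g (t * z)).re * (g (t * z)).re / Complex.normSq (g (t * z)) + (t * z * deriv g (t * z)).im * (g (t * z)).im / Complex.normSq (g (t * z)))) = α * Complex.normSq (g (t * z)) + ((t * z * deriv g (t * z)).re * (g (t * z)).re + (t * z * deriv g (t * z)).im * (g (t * z)).im) := by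
        rw [Complex.ofReal_re]; field_simp
      rw [h7] at h6
      have h8 : α * Complex.normSq (g (t * z)) ≤ n * Complex.normSq (g (t * z)) :=
        mul_le_mul_of_nonneg_right hnα h5.le
      have h9 : (t * z * deriv g (t * z)) = (t : ℂ) * (deriv g (t * z) * z) := by ring
      rw [h9, Complex.re_ofReal_mul, Complex.im_ofReal_mul] at h6
      rw [Complex.normSq_apply] at h6 h8
      nlinarith
    obtain ⟨m, rfl⟩ := Nat.exists_eq_succ_of_ne_zero hn0
    have h10 : 0 ≤ 2 * t ^ (2 * m + 1) := by have := ht.1; positivity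
    have h11 := mul_nonneg h10 h4
    refine h11.trans_eq ?_
    have e1 : 2 * (m + 1) - 1 = 2 * m + 1 := by omega
    simp only [Nat.succ_eq_add_one, e1]
    push_cast
    simp
    ring
  have hmono : MonotoneOn N (Set.Icc 0 1) := by
    refine monotoneOn_of_deriv_nonneg (convex_Icc 0 1) ?_ ?_ ?_
    · intro t ht
      obtain ⟨d, hd, -⟩ := hN t ht
      exact hd.continuousAt.continuousWithinAt
    · intro t ht
      obtain ⟨d, hd, -⟩ := hN t (interior_subset ht)
      exact hd.differentiableAt.differentiableWithinAt
    · intro t ht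
      obtain ⟨d, hd, h0⟩ := hN t (interior_subset ht)
      rwa [hd.deriv]
  have hzero : ∀ t ∈ Set.Ioo (0 : ℝ) 1, g (t * z) = 0 := by
    intro t ht
    have h1 := hmono (Set.Ioo_subset_Icc_self ht) (Set.right_mem_Icc.2 zero_le_one) ht.2.le
    simp only [N] at h1
    simp only [Complex.ofReal_one, one_mul, hgz] at h1
    simp at h1
    have h2 : 0 < t ^ (2 * n) := pow_pos ht.1 _
    have h3 : (g (t * z)).re ^ 2 + (g (t * z)).im ^ 2 ≤ 0 := by
      by_contra hh
      push Not at hh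
      nlinarith [mul_pos h2 hh]
    apply Complex.ext
    · simp; nlinarith [sq_nonneg (g (t * z)).re, sq_nonneg (g (t * z)).im]
    · simp; nlinarith [sq_nonneg (g (t * z)).re, sq_nonneg (g (t * z)).im]
  have hc := (aux_radial (hd 0 (Set.left_mem_Icc.2 zero_le_one))).continuousAt
  have hc2 : Filter.Tendsto (fun t : ℝ => g (t * z)) (nhdsWithin 0 (Set.Ioi 0)) (nhds 1) := by
    have := hc.tendsto.mono_left (nhdsWithin_le_nhds (s := Set.Ioi 0))
    simpa [hg0] using this
  have hc3 : Filter.Tendsto (fun t : ℝ => g (t * z)) (nhdsWithin 0 (Set.Ioi 0)) (nhds 0) := by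
    refine tendsto_const_nhds.congr' ?_
    filter_upwards [Ioo_mem_nhdsGT (show (0 : ℝ) < 1 by norm_num)] with t ht
    exact (hzero t ht).symm
  exact one_ne_zero (tendsto_nhds_unique hc2 hc3)

theorem stmt_0 (f : ℂ → ℂ) (α : ℝ) (hα : 1 < α)
    (hf : DifferentiableOn ℂ f (ball 0 1)) (hf0 : f 0 = 0) (hf1 : deriv f 0 = 1)
    (harg : ∀ z ∈ ball (0 : ℂ) 1,
      |Complex.arg ((α : ℂ) + z * deriv (deriv f) z / deriv f z)| <
        Real.arctan (Real.sqrt 3 / (α - 1))) :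
    ∀ z ∈ ball (0 : ℂ) 1, z ≠ 0 → 0 < (z * deriv f z / f z).re := by
  have hg : DifferentiableOn ℂ (deriv f) (ball 0 1) := hf.deriv isOpen_ball
  have hgne : ∀ z ∈ ball (0 : ℂ) 1, deriv f z ≠ 0 :=
    aux_nonvanish hg hf1 fun z hz => (aux_sector (harg z hz)).1
  let q : ℂ → ℂ := fun z => dslope f 0 z / deriv f z
  have hq : DifferentiableOn ℂ q (ball 0 1) :=
    ((Complex.differentiableOn_dslope (ball_mem_nhds 0 one_pos)).2 hf).div hg hgne
  have hq0 : q 0 = 1 := by simp [q, hf1]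
  have hqf : ∀ z ∈ ball (0 : ℂ) 1, z * q z * deriv f z = f z := by
    intro z hz
    have h1 := hgne z hz
    have h2 : z * dslope f 0 z = f z := by
      have := sub_smul_dslope f 0 z
      simpa [hf0] using this
    simp only [q]
    rw [← h2]
    field_simp
  have hode : ∀ z ∈ ball (0 : ℂ) 1,
      q z * (1 + z * deriv (deriv f) z / deriv f z) = 1 - z * deriv q z := by
    intro z hz
    have h1 := hgne z hz
    have hnh := isOpen_ball.mem_nhds hz
    have d1 := ((hasDerivAt_id z).mul (hq.differentiableAt hnh).hasDerivAt).mul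
      (hg.differentiableAt hnh).hasDerivAt
    have d2 : HasDerivAt f _ z := d1.congr_of_eventuallyEq (by
      filter_upwards [hnh] with w hw
      simpa using (hqf w hw).symm)
    have d3 := d2.deriv
    simp at d3
    field_simp
    linear_combination -d3
  have key : ∀ z ∈ ball (0 : ℂ) 1, 0 < (q z).re := by
    by_contra hcon
    push Not at hcon
    obtain ⟨z1, hz1, hz1q⟩ := hcon
    have hz1' : ‖z1‖ < 1 := by simpa using hz1
    have hsub : closedBall (0 : ℂ) ‖z1‖ ⊆ ball 0 1 := closedBall_subset_ball hz1'
    have hcont : ContinuousOn (fun z => (q z).re) (closedBall 0 ‖z1‖) :=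
      Complex.continuous_re.comp_continuousOn (hq.continuousOn.mono hsub)
    have hK : IsCompact (closedBall (0 : ℂ) ‖z1‖ ∩ (fun z => (q z).re) ⁻¹' Set.Iic 0) :=
      (isCompact_closedBall (0 : ℂ) ‖z1‖).of_isClosed_subset
        (hcont.preimage_isClosed_of_isClosed isClosed_closedBall isClosed_Iic)
        Set.inter_subset_left
    obtain ⟨z, ⟨hzK, hzq⟩, hmin⟩ := hK.exists_isMinOn ⟨z1, by simp, hz1q⟩
      continuous_norm.continuousOn
    have hzq' : (q z).re ≤ 0 := hzq
    have hzb := hsub hzK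
    have hzle : ‖z‖ ≤ ‖z1‖ := by simpa using hzK
    have hz0 : z ≠ 0 := by
      rintro rfl
      rw [hq0] at hzq'
      norm_num at hzq'
    have hpos : ∀ w : ℂ, ‖w‖ < ‖z‖ → 0 < (q w).re := by
      intro w hw
      by_contra hcon
      have h1 : ‖z‖ ≤ ‖w‖ := hmin (⟨by simpa using hw.le.trans hzle, not_lt.1 hcon⟩ :
        w ∈ closedBall (0 : ℂ) ‖z1‖ ∩ (fun z => (q z).re) ⁻¹' Set.Iic 0)
      linarith
    have hnn : ∀ w : ℂ, ‖w‖ = ‖z‖ → 0 ≤ (q w).re := by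
      intro w hw
      have hwb : w ∈ ball (0 : ℂ) 1 := by
        have : ‖z‖ < 1 := by simpa using hzb
        simpa [hw] using this
      have hwd : DifferentiableAt ℂ q (((1 : ℝ) : ℂ) * w) := by
        simpa using hq.differentiableAt (isOpen_ball.mem_nhds hwb)
      have hc := (aux_re (aux_radial hwd)).continuousAt.tendsto.mono_left
        (nhdsWithin_le_nhds (s := Set.Iio 1))
      simp only [Complex.ofReal_one, one_mul] at hc
      refine ge_of_tendsto hc ?_
      filter_upwards [Ioo_mem_nhdsLT (show (0 : ℝ) < 1 by norm_num)] with t ht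
      refine (hpos _ ?_).le
      have : 0 < ‖z‖ := norm_pos_iff.2 hz0
      rw [norm_mul, Complex.norm_real, Real.norm_of_nonneg ht.1.le, hw]
      nlinarith [ht.2]
    have hre : (q z).re = 0 := le_antisymm hzq' (hnn z rfl)
    obtain ⟨hj1, hj2⟩ := aux_jack hq hq0 hzb hz0 hre hpos hnn
    have ho := hode z hzb
    have hs := (aux_sector (harg z hzb)).2
    set u := z * deriv (deriv f) z / deriv f z with hu
    have o1 := congrArg Complex.re ho
    have o2 := congrArg Complex.im ho
    rw [Complex.mul_re, Complex.sub_re, hre] at o1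
    rw [Complex.mul_im, Complex.sub_im, hre, hj1] at o2
    simp only [Complex.add_re, Complex.add_im, Complex.one_re, Complex.one_im,
      Complex.ofReal_re, Complex.ofReal_im] at o1 o2 hs
    set y := (q z).im
    have hy : y ≠ 0 := by
      intro hy
      rw [hy] at o1 hj2
      linarith
    have hur : u.re = -1 := by
      have : y * (1 + u.re) = 0 := by linarith
      rcases mul_eq_zero.1 this with h | h
      · exact absurd h hy
      · linarith
    have hs2 := hs (by rw [hur]; linarith)
    have hα' : α - 1 ≠ 0 := by linarith
    have e : √3 / (α - 1) * (α + u.re) = √3 := by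
      rw [hur, ← sub_eq_add_neg]; field_simp
    rw [e, zero_add] at hs2
    have hs3 : u.im ^ 2 < 3 := by
      have := pow_lt_pow_left₀ hs2 (abs_nonneg _) (n := 2) (by norm_num)
      rwa [sq_abs, Real.sq_sqrt (by norm_num)] at this
    have hb : (3 + y ^ 2) / 2 ≤ -(y * u.im) := by linarith
    have hy2 : 0 < y ^ 2 := by positivity
    have hb2 : ((3 + y ^ 2) / 2) ^ 2 ≤ (-(y * u.im)) ^ 2 :=
      pow_le_pow_left₀ (by positivity) hb 2
    nlinarith [sq_nonneg (3 - y ^ 2), mul_lt_mul_of_pos_left hs3 hy2]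
  intro z hz hz0
  have h1 := key z hz
  have h2 := hgne z hz
  have hqne : q z ≠ 0 := by
    intro h
    rw [h] at h1
    simp at h1
  have h3 : z * deriv f z / f z = (q z)⁻¹ := by
    rw [← hqf z hz]
    field_simp
  rw [h3, Complex.inv_re]
  exact div_pos h1 (Complex.normSq_pos.2 hqne)
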